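/- Fix a real number $\hbar>0$ and an integer $N\ge 2$; let $i$ be the imaginary unit, $\Gamma$ the complex Gamma function, and $\hbar^z:=\exp(z\log\hbar)$ for $z\in\mathbb{C}$. A Gelfand–Zetlin array is a family $\gamma=(\gamma_{nj})_{1\le j\le n\le N}$ of complex numbers; let $e_{nj}$ be the array equal to $1$ in position $(n,j)$ and $0$ elsewhere. The array $\gamma$ is called non-resonant if for all $1\le n\le N-1$ and $1\le j<s\le n$ the number $(\gamma_{nj}-\gamma_{ns})/(i\hbar)$ is not an integer. Put $$s_n(\gamma_n,\gamma_{n+1})=\prod_{k=1}^{n}\prod_{m=1}^{n+1}\hbar^{\frac{\gamma_{nk}-\gamma_{n+1,m}}{i\hbar}+\frac12}\,\Gamma\Big(\frac{\gamma_{nk}-\gamma_{n+1,m}}{i\hbar}+\frac12\Big),\qquad w_N(\gamma)=e^{-\frac{\pi}{\hbar}\sum_{n=1}^{N-1}(n-1)\sum_{j=1}^{n}\gamma_{nj}}\prod_{n=1}^{N-1}s_n(\gamma_n,\gamma_{n+1}),$$ and, for $1\le n\le N-1$ and a function $f$ of Gelfand–Zetlin arrays, $$(E_{n,n+1}f)(\gamma)=-\frac{1}{i\hbar}\sum_{j=1}^{n}\frac{\prod_{r=1}^{n+1}(\gamma_{nj}-\gamma_{n+1,r}-\frac{i\hbar}{2})}{\prod_{s\le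 n,\,s\ne j}(\gamma_{nj}-\gamma_{ns})}\,f(\gamma-i\hbar e_{nj}).$$ Let $\gamma$ be a non-resonant Gelfand–Zetlin array such that for all $1\le n\le N-1$, $1\le k\le n$, $1\le m\le n+1$ the number $(\gamma_{nk}-\gamma_{n+1,m})/(i\hbar)+\frac12$ is not an integer. Then for every $1\le n\le N-1$ $$(E_{n,n+1}w_N)(\gamma)=-i\,\hbar^{-1}\,w_N(\gamma)\sum_{j=1}^{n}\frac{\prod_{r=1}^{n-1}(\gamma_{nj}-\gamma_{n-1,r}-\frac{i\hbar}{2})}{\prod_{s\le n,\,s\ne j}(\gamma_{nj}-\gamma_{ns})},$$ where an empty product equals $1$ (so the numerator is $1$ for $n=1$). -/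

import Mathlib

open Finset

noncomputable section

/-- A Gelfand–Zetlin array: complex values `γ n j`. Only the entries with `1 ≤ j ≤ n ≤ N`
are ever used; the others are irrelevant padding. -/
abbrev GZ := ℕ → ℕ → ℂ

/-- Shift of the single variable `γ n j` by `c`. -/
def gzShift (c : ℂ) (n j : ℕ) (γ : GZ) : GZ :=
  fun a b => if a = n ∧ b = j then γ a b + c else γ a b

/-- The raising Gelfand–Zetlin operator `E_{n,n+1}`. -/
def Eraise (ℏ : ℝ) (n : ℕ) (f : GZ → ℂ) : GZ → ℂ := fun γ =>
  -(1 / (Complex.I * ℏ)) * ∑ j ∈ Icc 1 n,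
    ((∏ r ∈ Icc 1 (n + 1), (γ n j - γ (n + 1) r - Complex.I * ℏ / 2)) /
      ∏ s ∈ (Icc 1 n).erase j, (γ n j - γ n s)) * f (gzShift (-(Complex.I * ℏ)) n j γ)

/-- Non-resonance: no two same-level entries differ by an integer multiple of `iℏ`. -/
def NonResonant (ℏ : ℝ) (N : ℕ) (γ : GZ) : Prop :=
  ∀ n ∈ Icc 1 (N - 1), ∀ j s : ℕ, 1 ≤ j → j < s → s ≤ n →
    ∀ m : ℤ, (γ n j - γ n s) / (Complex.I * ℏ) ≠ (m : ℂ)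

/-- `ℏ^z := exp(z log ℏ)`. -/
def hpow (ℏ : ℝ) (z : ℂ) : ℂ := Complex.exp (z * (Real.log ℏ : ℂ))

/-- The factor `s_n(γ_n, γ_{n+1})`. -/
def sW (ℏ : ℝ) (n : ℕ) (γ : GZ) : ℂ :=
  ∏ k ∈ Icc 1 n, ∏ m ∈ Icc 1 (n + 1),
    hpow ℏ ((γ n k - γ (n + 1) m) / (Complex.I * ℏ) + 1 / 2) *
      Complex.Gamma ((γ n k - γ (n + 1) m) / (Complex.I * ℏ) + 1 / 2)

/-- The Whittaker vector `w_N`. -/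
def wWhit (ℏ : ℝ) (N : ℕ) (γ : GZ) : ℂ :=
  Complex.exp (-((Real.pi / ℏ : ℝ) : ℂ) *
      ∑ n ∈ Icc 1 (N - 1), ((n : ℂ) - 1) * ∑ j ∈ Icc 1 n, γ n j) *
    ∏ n ∈ Icc 1 (N - 1), sW ℏ n γ

end

/-!
Each factor of `s_n` is a function `g(u) = ℏ^z Γ(z)` of a difference `u` of entries, where
`z = u / (iℏ) + 1/2`, and `Γ(z + 1) = z Γ(z)` becomes `g(u + iℏ) = -i (u + iℏ/2) g(u)`. Hence the
shift `γ_{nj} ↦ γ_{nj} - iℏ` turns `s_n` into `s_n` times `iⁿ⁺¹` over precisely the numerator of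
`E_{n,n+1}`, and `s_{n-1}` into `s_{n-1}` times `iⁿ⁻¹` times the numerator of the right-hand side.
The exponential prefactor contributes `(-1)ⁿ⁻¹`, so all the phases combine to `-1`, in each
summand separately.
-/

section GammaFactor

variable {ℏ : ℝ}

/-- The argument `u / (iℏ) + 1/2` of the Gamma function in the factor of `s_n` attached to the
difference `u` of two entries. -/
noncomputable def gammaArg (ℏ : ℝ) (u : ℂ) : ℂ := u / (Complex.I * ℏ) + 1 / 2

/-- The factor `ℏ^z Γ(z)`, `z = u / (iℏ) + 1/2`, of `s_n` attached to the difference `u` of two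
entries. -/
noncomputable def gammaFactor (ℏ : ℝ) (u : ℂ) : ℂ :=
  hpow ℏ (gammaArg ℏ u) * Complex.Gamma (gammaArg ℏ u)

theorem hpow_add_one (hℏ : 0 < ℏ) (z : ℂ) : hpow ℏ (z + 1) = hpow ℏ z * ℏ := by
  rw [hpow, hpow, add_one_mul, Complex.exp_add, ← Complex.ofReal_exp, Real.exp_log hℏ]

theorem gammaArg_add (hℏ : ℏ ≠ 0) (u : ℂ) : gammaArg ℏ (u + Complex.I * ℏ) = gammaArg ℏ u + 1 := by
  have hIℏ : Complex.I * (ℏ : ℂ) ≠ 0 := mul_ne_zero Complex.I_ne_zero (mod_cast hℏ)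
  rw [gammaArg, gammaArg, add_div, div_self hIℏ, add_right_comm]

theorem mul_gammaArg (hℏ : ℏ ≠ 0) (u : ℂ) :
    ℏ * gammaArg ℏ u = -Complex.I * (u + Complex.I * ℏ / 2) := by
  have hℏ' : (ℏ : ℂ) ≠ 0 := mod_cast hℏ
  rw [gammaArg, ← div_div, Complex.div_I]
  field_simp
  linear_combination ℏ * Complex.I_sq

theorem gammaFactor_add (hℏ : 0 < ℏ) {u : ℂ} (hu : gammaArg ℏ u ≠ 0) :
    gammaFactor ℏ (u + Complex.I * ℏ) =
      -Complex.I * (u + Complex.I * ℏ / 2) * gammaFactor ℏ u := by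
  rw [gammaFactor, gammaArg_add hℏ.ne', hpow_add_one hℏ, Complex.Gamma_add_one _ hu,
    ← mul_gammaArg hℏ.ne', gammaFactor]
  ring

theorem mul_gammaFactor_sub (hℏ : 0 < ℏ) {u : ℂ} (hu : gammaArg ℏ u ≠ 1) :
    (u - Complex.I * ℏ / 2) * gammaFactor ℏ (u - Complex.I * ℏ) =
      Complex.I * gammaFactor ℏ u := by
  have harg := gammaArg_add hℏ.ne' (u - Complex.I * ℏ)
  rw [sub_add_cancel] at harg
  have hfactor := gammaFactor_add hℏ (u := u - Complex.I * ℏ) (by grind)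
  rw [sub_add_cancel] at hfactor
  rw [hfactor]
  linear_combination
    (u - Complex.I * ℏ / 2) * gammaFactor ℏ (u - Complex.I * ℏ) * Complex.I_sq

theorem prod_mul_prod_gammaFactor_sub {ι : Type*} (hℏ : 0 < ℏ) {S : Finset ι} {u : ℂ} {v : ι → ℂ}
    (h : ∀ m ∈ S, gammaArg ℏ (u - v m) ≠ 1) :
    (∏ m ∈ S, (u - v m - Complex.I * ℏ / 2)) * ∏ m ∈ S, gammaFactor ℏ (u - Complex.I * ℏ - v m) =
      Complex.I ^ #S * ∏ m ∈ S, gammaFactor ℏ (u - v m) := by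
  rw [← prod_mul_distrib, ← prod_const, ← prod_mul_distrib]
  refine prod_congr rfl fun m hm => ?_
  rw [sub_right_comm u (Complex.I * ℏ), mul_gammaFactor_sub hℏ (h m hm)]

theorem prod_gammaFactor_sub_sub {ι : Type*} (hℏ : 0 < ℏ) {S : Finset ι} {u : ℂ} {v : ι → ℂ}
    (h : ∀ k ∈ S, gammaArg ℏ (v k - u) ≠ 0) :
    ∏ k ∈ S, gammaFactor ℏ (v k - (u - Complex.I * ℏ)) =
      Complex.I ^ #S * (∏ k ∈ S, (u - v k - Complex.I * ℏ / 2)) *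
        ∏ k ∈ S, gammaFactor ℏ (v k - u) := by
  rw [← prod_const, ← prod_mul_distrib, ← prod_mul_distrib]
  refine prod_congr rfl fun k hk => ?_
  rw [← sub_add, gammaFactor_add hℏ (h k hk)]
  ring

theorem sW_eq_prod_gammaFactor (ℏ : ℝ) (n : ℕ) (γ : GZ) :
    sW ℏ n γ = ∏ k ∈ Icc 1 n, ∏ m ∈ Icc 1 (n + 1), gammaFactor ℏ (γ n k - γ (n + 1) m) := rfl

end GammaFactor

section Shift

variable {c : ℂ} {n j : ℕ} {γ : GZ}

@[simp]
theorem gzShift_self : gzShift c n j γ n j = γ n j + c := by simp [gzShift]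

theorem gzShift_of_row_ne {a : ℕ} (ha : a ≠ n) (b : ℕ) : gzShift c n j γ a b = γ a b := by
  simp [gzShift, ha]

theorem gzShift_of_col_ne (a : ℕ) {b : ℕ} (hb : b ≠ j) : gzShift c n j γ a b = γ a b := by
  simp [gzShift, hb]

theorem sum_row_gzShift (hj : j ∈ Icc 1 n) :
    ∑ b ∈ Icc 1 n, gzShift c n j γ n b = (∑ b ∈ Icc 1 n, γ n b) + c := by
  rw [← add_sum_erase _ _ hj, ← add_sum_erase _ (γ n) hj, gzShift_self,
    sum_congr rfl fun b hb => gzShift_of_col_ne n (ne_of_mem_erase hb)]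
  ring

end Shift

section Whittaker

variable {ℏ : ℝ} {N n j : ℕ} {γ : GZ}

theorem prod_mul_sW_gzShift (hℏ : 0 < ℏ) (hj : j ∈ Icc 1 n)
    (h : ∀ m ∈ Icc 1 (n + 1), gammaArg ℏ (γ n j - γ (n + 1) m) ≠ 1) :
    (∏ r ∈ Icc 1 (n + 1), (γ n j - γ (n + 1) r - Complex.I * ℏ / 2)) *
        sW ℏ n (gzShift (-(Complex.I * ℏ)) n j γ) =
      Complex.I ^ (n + 1) * sW ℏ n γ := by
  have hrow := prod_mul_prod_gammaFactor_sub hℏ h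
  rw [Nat.card_Icc, Nat.add_sub_cancel] at hrow
  simp only [sW_eq_prod_gammaFactor, gzShift_of_row_ne n.succ_ne_self]
  rw [← mul_prod_erase _ _ hj, ← mul_prod_erase (Icc 1 n) _ hj, gzShift_self, ← sub_eq_add_neg,
    ← mul_assoc, hrow, mul_assoc]
  congr 2
  refine prod_congr rfl fun k hk => ?_
  rw [gzShift_of_col_ne n (ne_of_mem_erase hk)]

theorem sW_gzShift_succ (hℏ : 0 < ℏ) (hj : j ∈ Icc 1 (n + 1))
    (h : ∀ k ∈ Icc 1 n, gammaArg ℏ (γ n k - γ (n + 1) j) ≠ 0) :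
    sW ℏ n (gzShift (-(Complex.I * ℏ)) (n + 1) j γ) =
      Complex.I ^ n * (∏ r ∈ Icc 1 n, (γ (n + 1) j - γ n r - Complex.I * ℏ / 2)) * sW ℏ n γ := by
  have hcol := prod_gammaFactor_sub_sub hℏ h
  rw [Nat.card_Icc, Nat.add_sub_cancel] at hcol
  simp only [sW_eq_prod_gammaFactor, gzShift_of_row_ne n.succ_ne_self.symm]
  rw [prod_comm, prod_comm (s := Icc 1 n), ← mul_prod_erase _ _ hj,
    ← mul_prod_erase (Icc 1 (n + 1)) _ hj, gzShift_self, ← sub_eq_add_neg, hcol, mul_assoc]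
  congr 2
  refine prod_congr rfl fun m hm => ?_
  rw [gzShift_of_col_ne (n + 1) (ne_of_mem_erase hm)]

theorem sW_gzShift_of_ne (ℏ : ℝ) (c : ℂ) {a : ℕ} (h : a ≠ n) (h' : a + 1 ≠ n) :
    sW ℏ a (gzShift c n j γ) = sW ℏ a γ := by
  simp only [sW_eq_prod_gammaFactor, gzShift_of_row_ne h, gzShift_of_row_ne h']

/-- The exponential prefactor of the Whittaker vector `w_N`. -/
noncomputable def wPrefactor (ℏ : ℝ) (N : ℕ) (γ : GZ) : ℂ :=
  Complex.exp (-((Real.pi / ℏ : ℝ) : ℂ) *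
    ∑ n ∈ Icc 1 (N - 1), ((n : ℂ) - 1) * ∑ j ∈ Icc 1 n, γ n j)

theorem wWhit_eq_wPrefactor_mul (ℏ : ℝ) (N : ℕ) (γ : GZ) :
    wWhit ℏ N γ = wPrefactor ℏ N γ * ∏ n ∈ Icc 1 (N - 1), sW ℏ n γ := rfl

theorem sum_weighted_gzShift {R : Finset ℕ} (f : ℕ → ℂ) (c : ℂ) (hn : n ∈ R) (hj : j ∈ Icc 1 n) :
    ∑ a ∈ R, f a * ∑ b ∈ Icc 1 a, gzShift c n j γ a b =
      (∑ a ∈ R, f a * ∑ b ∈ Icc 1 a, γ a b) + f n * c := by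
  have hrest : ∑ a ∈ R.erase n, f a * ∑ b ∈ Icc 1 a, gzShift c n j γ a b =
      ∑ a ∈ R.erase n, f a * ∑ b ∈ Icc 1 a, γ a b :=
    sum_congr rfl fun a ha => by simp only [gzShift_of_row_ne (ne_of_mem_erase ha)]
  rw [← add_sum_erase _ _ hn, ← add_sum_erase R _ hn, sum_row_gzShift hj, hrest]
  ring

theorem wPrefactor_gzShift (hℏ : ℏ ≠ 0) (hn : n + 1 ∈ Icc 1 (N - 1)) (hj : j ∈ Icc 1 (n + 1)) :
    wPrefactor ℏ N (gzShift (-(Complex.I * ℏ)) (n + 1) j γ) = (-1) ^ n * wPrefactor ℏ N γ := by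
  have hℏ' : (ℏ : ℂ) ≠ 0 := mod_cast hℏ
  have hexp : -((Real.pi / ℏ : ℝ) : ℂ) * ((((n + 1 : ℕ) : ℂ) - 1) * -(Complex.I * ℏ)) =
      n * (Real.pi * Complex.I) := by
    push_cast
    field_simp
    ring
  rw [wPrefactor, sum_weighted_gzShift _ _ hn hj, mul_add, Complex.exp_add, hexp,
    Complex.exp_nat_mul, Complex.exp_pi_mul_I, mul_comm, wPrefactor]

-- Adjoining `s_0 = 1` spares a separate treatment of the bottom level `n = 1`.
theorem prod_sW_eq_prod_range (ℏ : ℝ) (N : ℕ) (γ : GZ) :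
    ∏ a ∈ Icc 1 (N - 1), sW ℏ a γ = ∏ a ∈ range N, sW ℏ a γ := by
  refine prod_subset (fun a ha => ?_) fun a ha ha' => ?_
  · grind
  · obtain rfl : a = 0 := by grind
    simp [sW]

theorem prod_sW_eq_mul_mul (ℏ : ℝ) (γ : GZ) (hn : n + 1 < N) :
    ∏ a ∈ Icc 1 (N - 1), sW ℏ a γ =
      sW ℏ (n + 1) γ * (sW ℏ n γ * ∏ a ∈ ((range N).erase (n + 1)).erase n, sW ℏ a γ) := by
  rw [prod_sW_eq_prod_range, mul_prod_erase _ (sW ℏ · γ), mul_prod_erase _ (sW ℏ · γ)] <;> grind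

theorem prod_mul_wWhit_gzShift (hℏ : 0 < ℏ) (hn : n + 1 ∈ Icc 1 (N - 1)) (hj : j ∈ Icc 1 (n + 1))
    (hupper : ∀ m ∈ Icc 1 (n + 2), gammaArg ℏ (γ (n + 1) j - γ (n + 2) m) ≠ 1)
    (hlower : ∀ k ∈ Icc 1 n, gammaArg ℏ (γ n k - γ (n + 1) j) ≠ 0) :
    (∏ r ∈ Icc 1 (n + 2), (γ (n + 1) j - γ (n + 2) r - Complex.I * ℏ / 2)) *
        wWhit ℏ N (gzShift (-(Complex.I * ℏ)) (n + 1) j γ) =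
      -((∏ r ∈ Icc 1 n, (γ (n + 1) j - γ n r - Complex.I * ℏ / 2)) * wWhit ℏ N γ) := by
  have hnN : n + 1 < N := by grind
  have hphase : (-1 : ℂ) ^ n * Complex.I ^ (n + 2) * Complex.I ^ n = -1 :=
    calc (-1 : ℂ) ^ n * Complex.I ^ (n + 2) * Complex.I ^ n
        = (-1) ^ n * (Complex.I ^ 2) ^ (n + 1) := by ring
      _ = -(-1 * -1) ^ n := by rw [Complex.I_sq, mul_pow]; ring
      _ = -1 := by norm_num
  have hlevel := prod_mul_sW_gzShift hℏ hj hupper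
  have hrest : ∏ a ∈ ((range N).erase (n + 1)).erase n,
        sW ℏ a (gzShift (-(Complex.I * ℏ)) (n + 1) j γ) =
      ∏ a ∈ ((range N).erase (n + 1)).erase n, sW ℏ a γ :=
    prod_congr rfl fun a ha => sW_gzShift_of_ne ℏ _ (by grind) (by grind)
  rw [wWhit_eq_wPrefactor_mul, wWhit_eq_wPrefactor_mul, wPrefactor_gzShift hℏ.ne' hn hj,
    prod_sW_eq_mul_mul _ _ hnN, prod_sW_eq_mul_mul _ _ hnN, sW_gzShift_succ hℏ hj hlower, hrest]
  generalize ∏ a ∈ ((range N).erase (n + 1)).erase n, sW ℏ a γ = rest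
  generalize ∏ r ∈ Icc 1 n, (γ (n + 1) j - γ n r - Complex.I * ℏ / 2) = B
  linear_combination
    ((-1) ^ n * wPrefactor ℏ N γ * Complex.I ^ n * B * sW ℏ n γ * rest) * hlevel +
    (wPrefactor ℏ N γ * B * sW ℏ (n + 1) γ * sW ℏ n γ * rest) * hphase

theorem NonResonant.injOn (hγ : NonResonant ℏ N γ) (hn : n ∈ Icc 1 (N - 1)) :
    Set.InjOn (γ n) (Icc 1 n) := by
  have hne : ∀ j s, 1 ≤ j → j < s → s ≤ n → γ n j ≠ γ n s := fun j s hj hjs hs h =>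
    hγ n hn j s hj hjs hs 0 (by simp [h])
  intro j hj s hs h
  rw [coe_Icc, Set.mem_Icc] at hj hs
  rcases lt_trichotomy j s with hjs | hjs | hjs
  · exact absurd h (hne j s hj.1 hjs hs.2)
  · exact hjs
  · exact absurd h.symm (hne s j hs.1 hjs hj.2)

end Whittaker

/-- By `hpole` and `hpole'`, no Gamma function in `w_N` is evaluated at a pole, neither at `γ` nor
at the arrays with one entry of row `n` shifted. -/
theorem Eraise_wN_eq_general {ℏ : ℝ} (hℏ : 0 < ℏ) {N n : ℕ} {γ : GZ} (hn : n ∈ Icc 1 (N - 1))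
    (_hinj : Set.InjOn (γ n) (Icc 1 n))
    (hpole : ∀ a ∈ Icc 1 (N - 1), ∀ k ∈ Icc 1 a, ∀ m ∈ Icc 1 (a + 1),
      ∀ p : ℕ, gammaArg ℏ (γ a k - γ (a + 1) m) ≠ -p)
    (hpole' : ∀ k ∈ Icc 1 n, ∀ m ∈ Icc 1 (n + 1), gammaArg ℏ (γ n k - γ (n + 1) m) ≠ 1) :
    Eraise ℏ n (wWhit ℏ N) γ =
      -Complex.I * (ℏ : ℂ)⁻¹ * wWhit ℏ N γ *
        ∑ j ∈ Icc 1 n,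
          (∏ r ∈ Icc 1 (n - 1), (γ n j - γ (n - 1) r - Complex.I * ℏ / 2)) /
            ∏ s ∈ (Icc 1 n).erase j, (γ n j - γ n s) := by
  obtain ⟨n, rfl⟩ : ∃ m, n = m + 1 := Nat.exists_eq_succ_of_ne_zero (by grind)
  rw [Eraise, one_div, mul_inv, Complex.inv_I, neg_mul, ← mul_neg, ← sum_neg_distrib,
    mul_assoc _ (wWhit ℏ N γ), mul_sum _ _ (wWhit ℏ N γ)]
  congr 1
  refine sum_congr rfl fun j hj => ?_
  have hlower : ∀ k ∈ Icc 1 n, gammaArg ℏ (γ n k - γ (n + 1) j) ≠ 0 := fun k hk => by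
    simpa using hpole n (by grind) k hk j hj 0
  rw [div_mul_eq_mul_div, prod_mul_wWhit_gzShift hℏ hn hj (hpole' j hj) hlower,
    Nat.add_sub_cancel, neg_div, neg_neg, mul_comm _ (wWhit ℏ N γ), mul_div_assoc]

/-- The action of `E_{n,n+1}` on the Whittaker vector `w_N`; the constant is
`−i·ℏ⁻¹ = (iℏ)⁻¹`. -/
theorem Eraise_wN_eq (ℏ : ℝ) (hℏ : 0 < ℏ) (N : ℕ) (hN : 2 ≤ N)
    (γ : GZ) (hγ : NonResonant ℏ N γ)
    (hγ' : ∀ n ∈ Icc 1 (N - 1), ∀ k ∈ Icc 1 n, ∀ m ∈ Icc 1 (n + 1),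
      ∀ z : ℤ, (γ n k - γ (n + 1) m) / (Complex.I * ℏ) + 1 / 2 ≠ (z : ℂ)) :
    ∀ n : ℕ, 1 ≤ n → n ≤ N - 1 →
      Eraise ℏ n (wWhit ℏ N) γ =
        -Complex.I * (ℏ : ℂ)⁻¹ * wWhit ℏ N γ *
          ∑ j ∈ Icc 1 n,
            (∏ r ∈ Icc 1 (n - 1), (γ n j - γ (n - 1) r - Complex.I * ℏ / 2)) /
              ∏ s ∈ (Icc 1 n).erase j, (γ n j - γ n s) := by
  exact fun n hn hnN =>
    have hmem : n ∈ Icc 1 (N - 1) := mem_Icc.mpr ⟨hn, hnN⟩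
    Eraise_wN_eq_general hℏ hmem (hγ.injOn hmem)
      (fun a ha k hk m hm p => by exact_mod_cast hγ' a ha k hk m hm (-p))
      fun k hk m hm => by exact_mod_cast hγ' n hmem k hk m hm 1
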